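/- arXiv:1209.6005 — 2 statements merged into one kernel-verified Lean document; each statement's English description precedes it below -/
import Mathlib

section
/- The closure of the torsion subgroup of the profinite group Ẑ^× = ∏_p Z_p^× equals T_Q = ∏_p T_p, the quotient Ẑ^×/T_Q is a free Ẑ-module of rank 1, and there is an isomorphism of topological groups Ẑ^× ≅ T_Q × Ẑ. -/
instance (p : Nat.Primes) : Fact (p : ℕ).Prime := ⟨p.2⟩

/-- `Ẑ = ∏_p ℤ_p`, the profinite completion of `ℤ`, as an additive topological group. -/
abbrev ZHat : Type := Π p : Nat.Primes, ℤ_[(p : ℕ)]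

/-- `Ẑˣ = ∏_p ℤ_pˣ`, with the product topology. -/
abbrev ZHatUnits : Type := Π p : Nat.Primes, ℤ_[(p : ℕ)]ˣ

/-- `T_ℚ = ∏_p T_p`, the product of the torsion subgroups `T_p ⊆ ℤ_pˣ`. -/
noncomputable def TQ : Subgroup ZHatUnits :=
  Subgroup.pi Set.univ fun p => CommGroup.torsion ℤ_[(p : ℕ)]ˣ

/-!
If `r ≠ 0` and `v(r) > 1 / (p - 1)`, then `a ↦ (1 + r) ^ a` multiplies distances by `|r|`, so
`a ↦ ((1 + r) ^ a - 1) / r` is an isometry of the compact space `ℤ_p` into itself, hence onto, and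
`a ↦ (1 + r) ^ a` is an isomorphism `ℤ_p ≅ 1 + rℤ_p`. Take `r = p` for odd `p` and `r = 4` for
`p = 2`, and put `n = p - 1` or `n = 2` respectively. Every `u ∈ ℤ_pˣ` then has a unique `a` with
`u ^ n = (1 + r) ^ (n * a)`; sending `u` to `a` retracts `ℤ_pˣ` onto `ℤ_p` with kernel `T_p`, and
the product of these retractions over `p` splits `Ẑˣ`. As for the closure, every element of `∏ T_p`
is the limit of its truncations to finitely many coordinates, which are torsion.
-/

open Topology

section CompactIsometry

variable {X : Type*} [MetricSpace X] [CompactSpace X] {f : X → X}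

theorem surjective_of_isometry_of_compactSpace (hf : Isometry f) : Function.Surjective f := by
  intro x
  by_contra hx
  have hclosed : IsClosed (Set.range f) := (isCompact_range hf.continuous).isClosed
  obtain ⟨ε, hε, hball⟩ := Metric.isOpen_iff.mp hclosed.isOpen_compl x hx
  have hfar (y : X) : ε ≤ dist (f y) x := not_lt.mp fun h ↦ hball h ⟨y, rfl⟩
  have hiter (m : ℕ) : Isometry f^[m] := Nat.rec isometry_id (fun _ ih ↦ ih.comp hf) m
  have hsep {m n : ℕ} (hmn : m < n) : ε ≤ dist (f^[n] x) (f^[m] x) := by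
    obtain ⟨k, rfl⟩ := Nat.exists_eq_add_of_lt hmn
    rw [add_assoc, Function.iterate_add_apply, (hiter m).dist_eq, Function.iterate_succ_apply']
    exact hfar _
  obtain ⟨a, φ, hφ, ha⟩ := CompactSpace.tendsto_subseq fun n ↦ f^[n] x
  obtain ⟨N, hN⟩ := Metric.cauchySeq_iff'.mp ha.cauchySeq ε hε
  exact (hN (N + 1) N.le_succ).not_ge (hsep (hφ N.lt_succ_self))

end CompactIsometry

section TopologicalGroup

theorem topologicalClosure_torsion_pi {ι : Type*} {G : ι → Type*} [∀ i, CommGroup (G i)]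
    [∀ i, TopologicalSpace (G i)] [∀ i, IsTopologicalGroup (G i)] :
    (CommGroup.torsion (Π i, G i)).topologicalClosure =
      Subgroup.pi Set.univ fun i ↦ (CommGroup.torsion (G i)).topologicalClosure := by
  classical
  apply le_antisymm
  · refine Subgroup.topologicalClosure_minimal _ (fun t ht i _ ↦ ?_)
      (isClosed_set_pi fun i _ ↦ Subgroup.isClosed_topologicalClosure _)
    exact Subgroup.le_topologicalClosure _ ((Pi.evalMonoidHom G i).isOfFinOrder ht)
  · have hdense : Set.univ.pi (fun i ↦ (CommGroup.torsion (G i) : Set (G i))) ⊆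
        (CommGroup.torsion (Π i, G i)).topologicalClosure := by
      intro t ht
      have hprod : HasProd (fun i ↦ Pi.mulSingle i (t i)) t :=
        Pi.hasProd.mpr fun i ↦ by
          simpa using hasProd_single (f := fun j ↦ Pi.mulSingle j (t j) i) i
            fun j hj ↦ Pi.mulSingle_eq_of_ne' hj _
      refine mem_closure_of_tendsto hprod (.of_forall fun F ↦ ?_)
      exact Subgroup.prod_mem _ fun i _ ↦
        (MonoidHom.mulSingle G i).isOfFinOrder (ht i (Set.mem_univ i))
    have hclosure := closure_minimal hdense (Subgroup.isClosed_topologicalClosure _)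
    rwa [closure_pi_set] at hclosure

/-- A continuous homomorphism `π` with a continuous set-theoretic section identifies `G ⧸ ker π`
with its target as a topological group; the section replaces the openness of `π`. -/
def quotientKerContinuousMulEquiv {G H : Type*} [Group G] [TopologicalSpace G] [Group H]
    [TopologicalSpace H] (π : G →ₜ* H) {σ : H → G} (hσ : Continuous σ)
    (h : Function.RightInverse σ π) : G ⧸ π.toMonoidHom.ker ≃ₜ* H where
  toMulEquiv := QuotientGroup.quotientKerEquivOfRightInverse π.toMonoidHom σ h
  continuous_toFun := π.continuous.quotient_lift _
  continuous_invFun := continuous_quot_mk.comp hσ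

/-- The splitting `g ↦ (g * σ (π g)⁻¹, π g)` of a commutative topological group along a continuous
homomorphism `π` with a continuous homomorphic section `σ`. -/
def kerProdContinuousMulEquiv {G H : Type*} [CommGroup G] [TopologicalSpace G]
    [IsTopologicalGroup G] [Group H] [TopologicalSpace H] (π : G →ₜ* H) (σ : H →ₜ* G)
    (h : Function.RightInverse σ π) : G ≃ₜ* π.toMonoidHom.ker × H where
  toFun g := (⟨g * (σ (π g))⁻¹, by simp [MonoidHom.mem_ker, h (π g)]⟩, π g)
  invFun x := x.1 * σ x.2
  left_inv g := by simp
  right_inv := by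
    rintro ⟨⟨t, ht⟩, a⟩
    replace ht : π t = 1 := ht
    simp [ht, h a]
  map_mul' g g' := by
    refine Prod.ext (Subtype.ext ?_) (map_mul π g g')
    simp only [map_mul, mul_inv, Prod.fst_mul, Subgroup.coe_mul, mul_mul_mul_comm]
  continuous_toFun := by
    refine .prodMk (.subtype_mk ?_ _) π.continuous
    exact continuous_id.mul (σ.continuous.comp π.continuous).inv
  continuous_invFun :=
    (continuous_subtype_val.comp continuous_fst).mul (σ.continuous.comp continuous_snd)

theorem exists_leftInverse_ker_eq_torsion {G H : Type*} [CommGroup G] [TopologicalSpace G]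
    [IsTopologicalGroup G] [T2Space G] [CommGroup H] [IsMulTorsionFree H] [TopologicalSpace H]
    [CompactSpace H] (E : H →ₜ* G) (hE : Function.Injective E) {n : ℕ} (hn : n ≠ 0)
    (hpow : ∀ g, ∃ a, E a ^ n = g ^ n) :
    ∃ L : G →ₜ* H, Function.LeftInverse L E ∧ L.toMonoidHom.ker = CommGroup.torsion G := by
  have hinj : Function.Injective fun a ↦ E a ^ n := fun a b hab ↦
    pow_left_injective hn (hE (by simpa only [map_pow] using hab))
  have hemb : IsEmbedding fun a ↦ E a ^ n :=
    (E.continuous.pow n).isClosedEmbedding hinj |>.isEmbedding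
  choose L hL using hpow
  let Lhom : G →* H := MonoidHom.mk' L fun g g' ↦ hinj <| by
    simp only [map_mul, mul_pow, hL]
  have hcont : Continuous Lhom := by
    rw [hemb.continuous_iff]
    exact (continuous_pow n).congr fun g ↦ (hL g).symm
  refine ⟨⟨Lhom, hcont⟩, fun a ↦ hinj (hL (E a)), le_antisymm (fun g hg ↦ ?_) fun g hg ↦ ?_⟩
  · have hg : L g = 1 := hg
    refine isOfFinOrder_iff_pow_eq_one.mpr ⟨n, hn.bot_lt, ?_⟩
    rw [← hL g, hg, map_one, one_pow]
  · exact (isOfFinOrder_iff_eq_one _).mp (Lhom.isOfFinOrder hg)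

end TopologicalGroup

section OneAddPow

variable {p : ℕ} [Fact p.Prime] {r : ℤ_[p]}

theorem padicInt_dvd_iff_norm_le {a b : ℤ_[p]} : a ∣ b ↔ ‖b‖ ≤ ‖a‖ := by
  constructor
  · rintro ⟨c, rfl⟩
    rw [norm_mul]
    exact mul_le_of_le_one_right (norm_nonneg a) c.norm_le_one
  · intro h
    rcases eq_or_ne a 0 with rfl | ha
    · simp_all
    have ha_coe : (a : ℚ_[p]) ≠ 0 := by simpa using ha
    refine ⟨⟨b / a, ?_⟩, Subtype.ext (mul_div_cancel₀ _ ha_coe).symm⟩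
    rw [norm_div]
    exact div_le_one_of_le₀ h (norm_nonneg _)

theorem norm_one_add_pow_sub_one_of_not_dvd {w : ℤ_[p]} (hw : ‖w‖ < 1) {k : ℕ} (hk : ¬p ∣ k) :
    ‖(1 + w) ^ k - 1‖ = ‖w‖ := by
  have hdvd : (p : ℤ_[p]) ∣ 1 + w - 1 := by
    rwa [add_sub_cancel_left, ← PadicInt.norm_lt_one_iff_dvd]
  have hsum : ‖∑ i ∈ Finset.range k, (1 + w) ^ i‖ = 1 := by
    have hiff := dvd_geom_sum₂_iff_of_dvd_sub (n := k) hdvd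
    simp only [one_pow, mul_one, ← PadicInt.norm_lt_one_iff_dvd,
      PadicInt.norm_natCast_lt_one_iff, hk, iff_false, not_lt] at hiff
    exact le_antisymm (PadicInt.norm_le_one _) hiff
  rw [← mul_geom_sum, norm_mul, hsum, add_sub_cancel_left, mul_one]

/-- As `v(r)` is an integer, `hrp` amounts to `v(r) > 1 / (p - 1)`, the disc of convergence of the
`p`-adic exponential. -/
theorem norm_one_add_pow_sub_one (hrp : (p : ℤ_[p]) * r * p ∣ r ^ p) (n : ℕ) :
    ‖(1 + r) ^ n - 1‖ = ‖r‖ * ‖(n : ℤ_[p])‖ := by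
  rcases eq_or_ne n 0 with rfl | hn
  · simp
  have hp : p.Prime := Fact.out
  have hpr : (p : ℤ_[p]) ∣ r :=
    PadicInt.prime_p.dvd_of_dvd_pow ((Dvd.intro_left _ rfl).trans hrp)
  obtain ⟨m, k, hk, rfl⟩ := Nat.exists_eq_pow_mul_and_not_dvd hn p hp.ne_one
  obtain ⟨y, hy⟩ := ZMod.exists_one_add_mul_pow_prime_pow_eq hp hpr hrp 1 m
  have hpy : ‖p * y‖ < 1 := (PadicInt.norm_lt_one_iff_dvd _).mpr (dvd_mul_right _ _)
  have hunit : ‖1 + p * y‖ = 1 := by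
    rw [PadicInt.norm_add_eq_max_of_ne (norm_one.trans_ne hpy.ne'), norm_one,
      max_eq_left hpy.le]
  have hk_norm : ‖(k : ℤ_[p])‖ = 1 :=
    PadicInt.norm_natCast_eq_one_iff.mpr ((Nat.Prime.coprime_iff_not_dvd hp).mpr hk)
  have hw : ‖(p : ℤ_[p]) ^ m * r * (1 + p * y)‖ < 1 :=
    (PadicInt.norm_lt_one_iff_dvd _).mpr ((hpr.mul_left _).mul_right _)
  rw [mul_one] at hy
  rw [pow_mul, hy, norm_one_add_pow_sub_one_of_not_dvd hw hk]
  simp only [norm_mul, hunit, hk_norm, Nat.cast_mul, Nat.cast_pow, mul_one]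
  exact mul_comm _ _

theorem continuous_toHomUnits {G M : Type*} [Group G] [TopologicalSpace G] [ContinuousInv G]
    [Monoid M] [TopologicalSpace M] {f : G →* M} (hf : Continuous f) :
    Continuous f.toHomUnits := by
  refine Units.continuous_iff.mpr ⟨hf, (hf.comp continuous_inv).congr fun g ↦ ?_⟩
  rw [← map_inv, MonoidHom.coe_toHomUnits, Function.comp_apply]

/-- The continuous homomorphism `a ↦ (1 + r) ^ a` from `ℤ_p` to `ℤ_pˣ`, extending the powers of
`1 + r` with natural exponents. -/
noncomputable def oneAddPow (hr : ‖r‖ < 1) : Multiplicative ℤ_[p] →ₜ* ℤ_[p]ˣ where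
  toMonoidHom := (PadicInt.addChar_of_value_at_one r
    (tendsto_pow_atTop_nhds_zero_iff_norm_lt_one.mpr hr)).toMonoidHom.toHomUnits
  continuous_toFun := continuous_toHomUnits <|
    (PadicInt.continuous_addChar_of_value_at_one
      (tendsto_pow_atTop_nhds_zero_iff_norm_lt_one.mpr hr)).comp continuous_toAdd

theorem coe_oneAddPow_natCast (hr : ‖r‖ < 1) (n : ℕ) :
    (oneAddPow hr (.ofAdd n) : ℤ_[p]) = (1 + r) ^ n := by
  have hone : (oneAddPow hr (.ofAdd 1) : ℤ_[p]) = 1 + r :=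
    PadicInt.addChar_of_value_at_one_def (tendsto_pow_atTop_nhds_zero_iff_norm_lt_one.mpr hr)
  rw [← nsmul_one n, ofAdd_nsmul, map_pow, Units.val_pow_eq_pow_val, hone]

theorem norm_oneAddPow_sub_one (hr : ‖r‖ < 1) (hrp : (p : ℤ_[p]) * r * p ∣ r ^ p) (a : ℤ_[p]) :
    ‖(oneAddPow hr (.ofAdd a) : ℤ_[p]) - 1‖ = ‖r‖ * ‖a‖ := by
  have hcont : Continuous fun a ↦ (oneAddPow hr (.ofAdd a) : ℤ_[p]) :=
    Units.continuous_val.comp ((oneAddPow hr).continuous.comp continuous_ofAdd)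
  induction a using PadicInt.denseRange_natCast.induction_on with
  | hp => exact isClosed_eq (hcont.sub continuous_const).norm (continuous_norm.const_mul _)
  | ih n => rw [coe_oneAddPow_natCast, norm_one_add_pow_sub_one hrp]

theorem norm_oneAddPow_sub_oneAddPow (hr : ‖r‖ < 1) (hrp : (p : ℤ_[p]) * r * p ∣ r ^ p)
    (a b : ℤ_[p]) :
    ‖(oneAddPow hr (.ofAdd a) - oneAddPow hr (.ofAdd b) : ℤ_[p])‖ = ‖r‖ * ‖a - b‖ := by
  have hmul : (oneAddPow hr (.ofAdd a) : ℤ_[p]) =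
      oneAddPow hr (.ofAdd b) * oneAddPow hr (.ofAdd (a - b)) := by
    rw [← Units.val_mul, ← map_mul, ← ofAdd_add, add_sub_cancel]
  rw [hmul, ← mul_sub_one, norm_mul, PadicInt.norm_units, one_mul, norm_oneAddPow_sub_one hr hrp]

theorem oneAddPow_injective (hr : ‖r‖ < 1) (hrp : (p : ℤ_[p]) * r * p ∣ r ^ p) (hr0 : r ≠ 0) :
    Function.Injective (oneAddPow hr) := by
  intro a b hab
  have hnorm := norm_oneAddPow_sub_oneAddPow hr hrp a.toAdd b.toAdd
  simpa [hab, hr0, sub_eq_zero] using hnorm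

theorem mem_range_oneAddPow (hr : ‖r‖ < 1) (hrp : (p : ℤ_[p]) * r * p ∣ r ^ p) (hr0 : r ≠ 0)
    {u : ℤ_[p]ˣ} (hu : r ∣ u - 1) : u ∈ Set.range (oneAddPow hr) := by
  have hdvd (a : ℤ_[p]) : r ∣ oneAddPow hr (.ofAdd a) - 1 := by
    rw [padicInt_dvd_iff_norm_le, norm_oneAddPow_sub_one hr hrp]
    exact mul_le_of_le_one_right (norm_nonneg r) a.norm_le_one
  choose f hf using hdvd
  have hisom : Isometry f := by
    refine Isometry.of_dist_eq fun a b ↦ mul_left_cancel₀ (norm_ne_zero_iff.mpr hr0) ?_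
    rw [dist_eq_norm, dist_eq_norm, ← norm_mul, mul_sub, ← hf, ← hf, sub_sub_sub_cancel_right,
      norm_oneAddPow_sub_oneAddPow hr hrp]
  obtain ⟨c, hc⟩ := hu
  obtain ⟨a, rfl⟩ := surjective_of_isometry_of_compactSpace hisom c
  exact ⟨.ofAdd a, Units.ext (sub_left_injective ((hf a).trans hc.symm))⟩

theorem exists_oneAddPow_pow_eq_of_coprime (hr : ‖r‖ < 1) (hrp : (p : ℤ_[p]) * r * p ∣ r ^ p)
    (hr0 : r ≠ 0) {n : ℕ} (hn : p.Coprime n) {u : ℤ_[p]ˣ} (hu : r ∣ (u ^ n : ℤ_[p]ˣ) - 1) :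
    ∃ a, oneAddPow hr a ^ n = u ^ n := by
  obtain ⟨b, hb⟩ := mem_range_oneAddPow hr hrp hr0 hu
  obtain ⟨v, hv⟩ := PadicInt.isUnit_iff.mpr (PadicInt.norm_natCast_eq_one_iff.mpr hn)
  refine ⟨.ofAdd (v⁻¹ * b.toAdd), ?_⟩
  rw [← map_pow, ← ofAdd_nsmul, nsmul_eq_mul, ← hv, Units.mul_inv_cancel_left, ofAdd_toAdd, hb]

theorem exists_oneAddPow_sq_eq (hr : ‖r‖ < 1) (hrp : (p : ℤ_[p]) * r * p ∣ r ^ p) (hr0 : r ≠ 0)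
    {u : ℤ_[p]ˣ} (hu : r ∣ u - 1 ∨ r ∣ (-u : ℤ_[p]ˣ) - 1) :
    ∃ a, oneAddPow hr a ^ 2 = u ^ 2 := by
  rcases hu with hu | hu
  · obtain ⟨a, ha⟩ := mem_range_oneAddPow hr hrp hr0 hu
    exact ⟨a, by rw [ha]⟩
  · obtain ⟨a, ha⟩ := mem_range_oneAddPow hr hrp hr0 hu
    exact ⟨a, by rw [ha, neg_sq]⟩

end OneAddPow

section PadicUnits

variable {p : ℕ} [Fact p.Prime]

theorem dvd_pow_sub_one_sub_one (u : ℤ_[p]ˣ) : (p : ℤ_[p]) ∣ (u ^ (p - 1) : ℤ_[p]ˣ) - 1 := by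
  rw [← Ideal.mem_span_singleton, ← PadicInt.maximalIdeal_eq_span_p, ← PadicInt.ker_toZMod,
    RingHom.mem_ker, map_sub, Units.val_pow_eq_pow_val, map_pow, map_one,
    ZMod.pow_card_sub_one_eq_one (u.isUnit.map _).ne_zero, sub_self]

theorem four_dvd_sub_one_or_four_dvd_neg_sub_one (u : ℤ_[2]ˣ) :
    (4 : ℤ_[2]) ∣ u - 1 ∨ (4 : ℤ_[2]) ∣ (-u : ℤ_[2]ˣ) - 1 := by
  have hunits : ∀ x : ZMod (2 ^ 2), IsUnit x → x - 1 = 0 ∨ -x - 1 = 0 := by decide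
  have hspan : Ideal.span {(4 : ℤ_[2])} = RingHom.ker (PadicInt.toZModPow (p := 2) 2) := by
    rw [PadicInt.ker_toZModPow]
    norm_num
  simp only [← Ideal.mem_span_singleton, hspan, RingHom.mem_ker, map_sub, Units.val_neg, map_neg,
    map_one]
  exact hunits _ (u.isUnit.map _)

variable (p) in
theorem exists_padicInt_units_leftInverse_ker_eq_torsion :
    ∃ (E : Multiplicative ℤ_[p] →ₜ* ℤ_[p]ˣ) (L : ℤ_[p]ˣ →ₜ* Multiplicative ℤ_[p]),
      Function.LeftInverse L E ∧ L.toMonoidHom.ker = CommGroup.torsion ℤ_[p]ˣ := by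
  have hp : p.Prime := Fact.out
  rcases eq_or_ne p 2 with rfl | hp2
  · have hr : ‖(4 : ℤ_[2])‖ < 1 := (PadicInt.norm_lt_one_iff_dvd _).mpr ⟨2, by norm_num⟩
    have hrp : ((2 : ℕ) : ℤ_[2]) * 4 * (2 : ℕ) ∣ 4 ^ 2 := ⟨1, by norm_num⟩
    have hr0 : (4 : ℤ_[2]) ≠ 0 := by norm_num
    exact ⟨oneAddPow hr, exists_leftInverse_ker_eq_torsion _ (oneAddPow_injective hr hrp hr0)
      two_ne_zero fun u ↦
        exists_oneAddPow_sq_eq hr hrp hr0 (four_dvd_sub_one_or_four_dvd_neg_sub_one u)⟩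
  · have hr : ‖(p : ℤ_[p])‖ < 1 := PadicInt.norm_natCast_lt_one_iff.mpr dvd_rfl
    have hrp : (p : ℤ_[p]) * p * p ∣ (p : ℤ_[p]) ^ p := by
      rw [← pow_three']
      exact pow_dvd_pow _ (hp.two_le.lt_of_ne' hp2)
    have hr0 : (p : ℤ_[p]) ≠ 0 := PadicInt.prime_p.ne_zero
    have hcoprime : p.Coprime (p - 1) :=
      (Nat.coprime_self_sub_right hp.one_le).mpr (Nat.coprime_one_right p)
    exact ⟨oneAddPow hr, exists_leftInverse_ker_eq_torsion _ (oneAddPow_injective hr hrp hr0)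
      (Nat.sub_ne_zero_of_lt hp.one_lt) fun u ↦
        exists_oneAddPow_pow_eq_of_coprime hr hrp hr0 hcoprime (dvd_pow_sub_one_sub_one u)⟩

theorem isClosed_torsion_padicInt_units : IsClosed (CommGroup.torsion ℤ_[p]ˣ : Set ℤ_[p]ˣ) := by
  obtain ⟨-, L, -, hker⟩ := exists_padicInt_units_leftInverse_ker_eq_torsion p
  rw [← hker]
  exact isClosed_singleton.preimage L.continuous

end PadicUnits

theorem topologicalClosure_torsion_zHatUnits :
    (CommGroup.torsion ZHatUnits).topologicalClosure = TQ := by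
  rw [topologicalClosure_torsion_pi, TQ]
  congr! with p
  exact SetLike.coe_injective isClosed_torsion_padicInt_units.closure_eq

theorem exists_zHatUnits_rightInverse_ker_eq_TQ :
    ∃ (L : ZHatUnits →ₜ* Multiplicative ZHat) (E : Multiplicative ZHat →ₜ* ZHatUnits),
      Function.RightInverse E L ∧ L.toMonoidHom.ker = TQ := by
  choose E L hLE hker using fun p : Nat.Primes ↦
    exists_padicInt_units_leftInverse_ker_eq_torsion p
  let Lprod : ZHatUnits →ₜ* Multiplicative ZHat :=
    { toMonoidHom := (MulEquiv.piMultiplicative fun p : Nat.Primes ↦ ℤ_[p]).symm.toMonoidHom.comp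
        (MonoidHom.piMap fun p ↦ (L p).toMonoidHom)
      continuous_toFun := continuous_ofAdd.comp <|
        .piMap fun p ↦ continuous_toAdd.comp (L p).continuous }
  let Eprod : Multiplicative ZHat →ₜ* ZHatUnits :=
    { toMonoidHom := (MonoidHom.piMap fun p ↦ (E p).toMonoidHom).comp
        (MulEquiv.piMultiplicative fun p : Nat.Primes ↦ ℤ_[p]).toMonoidHom
      continuous_toFun := (Continuous.piMap fun p ↦ (E p).continuous.comp continuous_ofAdd).comp
        continuous_toAdd }
  refine ⟨Lprod, Eprod, fun a ↦ funext fun p ↦ hLE p _, ?_⟩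
  ext u
  simp only [TQ, Subgroup.mem_pi, ← hker, Set.mem_univ, true_imp_iff]
  exact funext_iff

/-- The closure of the torsion subgroup of `Ẑˣ = ∏_p ℤ_pˣ` equals `T_ℚ = ∏_p T_p`,
the quotient `Ẑˣ/T_ℚ` is a free `Ẑ`-module of rank 1 (i.e. isomorphic to `Ẑ` as a
topological group), and `Ẑˣ ≅ T_ℚ × Ẑ` as topological groups. -/
theorem closure_torsion_eq_TQ_and_quotient_free_rank_one_and_units_iso :
    (CommGroup.torsion ZHatUnits).topologicalClosure = TQ ∧
    (∃ e : Additive (ZHatUnits ⧸ TQ) ≃+ ZHat, Continuous e ∧ Continuous e.symm) ∧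
    (∃ e : ZHatUnits ≃* TQ × Multiplicative ZHat, Continuous e ∧ Continuous e.symm) := by
  refine ⟨topologicalClosure_torsion_zHatUnits, ?_⟩
  obtain ⟨L, E, hLE, hker⟩ := exists_zHatUnits_rightInverse_ker_eq_TQ
  rw [← hker]
  let quotientIso := quotientKerContinuousMulEquiv L E.continuous hLE
  let splitting := kerProdContinuousMulEquiv L E hLE
  exact ⟨⟨MulEquiv.toAdditiveLeft quotientIso.toMulEquiv,
      continuous_toAdd.comp (quotientIso.continuous.comp continuous_toMul),
      continuous_ofMul.comp (quotientIso.symm.continuous.comp continuous_ofAdd)⟩,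
    splitting.toMulEquiv, splitting.continuous, splitting.symm.continuous⟩
end

section
/- There is an isomorphism of topological groups ∏_p T_p ≅ ∏_{n≥1} Z/nZ, where the left product is over all prime numbers p and the right product is over all positive integers n, both carrying the product topology. -/
/-!
The group `T_p` is finite cyclic and discrete, and for odd `p` reduction modulo `p` identifies it
with `(ℤ/p)ˣ`: Hensel's lemma lifts every `(p - 1)`-st root of unity, and `1 + pℤ_p` is
torsion-free. By the Chinese remainder theorem, a product of finite cyclic groups is determined by
the multiplicity with which each prime power `q ^ k` occurs as the order of a primary component of
a factor. On the right all these multiplicities are `ℵ₀`; on the left they are `ℵ₀` by Dirichlet's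
theorem, applied to the primes `p ≡ 1 + q ^ k` modulo `q ^ (k + 1)`.
-/

section Products

variable {ι κ : Type*}

/-- The indices `i` for which the `q`-primary component of `ZMod (m i)` is cyclic of order `q ^ k`,
where `c = (q, k)`. Only `k > 0` is allowed, so that trivial components are not counted. -/
abbrev PrimaryIndex (m : ι → ℕ) (c : Nat.Primes × ℕ+) : Type _ :=
  {i // (m i).factorization c.1 = c.2}

lemma PrimaryIndex.pow_dvd {m : ι → ℕ} {c : Nat.Primes × ℕ+} (i : PrimaryIndex m c) :
    (c.1 : ℕ) ^ (c.2 : ℕ) ∣ m i := by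
  obtain ⟨i, hi⟩ := i
  simpa only [hi] using Nat.ordProj_dvd (m i) c.1

/-- The map from a product of cyclic groups to the product of its primary components, grouped by
order: `ZMod (q ^ k)` occurs once for each `i` in `PrimaryIndex m (q, k)`. -/
def piZModToPrimary (m : ι → ℕ) :
    (Π i, ZMod (m i)) →+* Π c : Nat.Primes × ℕ+, PrimaryIndex m c → ZMod (c.1 ^ (c.2 : ℕ)) :=
  RingHom.pi fun _ ↦ RingHom.pi fun i ↦
    (ZMod.castHom i.pow_dvd _).comp (Pi.evalRingHom _ i.1)

lemma continuous_piZModToPrimary (m : ι → ℕ) : Continuous (piZModToPrimary m) :=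
  continuous_pi fun _ ↦ continuous_pi fun i ↦
    continuous_of_discreteTopology.comp (continuous_apply i.1)

lemma zmodEquivPi_apply {n : ℕ} (hn : n ≠ 0) (a : ZMod n) (q : n.primeFactors) :
    ZMod.equivPi n hn a q = ZMod.castHom (Nat.ordProj_dvd n q) _ a :=
  RingHom.congr_fun (Subsingleton.elim
    ((Pi.evalRingHom _ q).comp (ZMod.equivPi n hn).toRingHom) _) a

lemma factorization_pos_of_mem_primeFactors {n q : ℕ} (hq : q ∈ n.primeFactors) :
    0 < n.factorization q :=
  Nat.pos_of_ne_zero (Finsupp.mem_support_iff.mp (n.support_factorization ▸ hq))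

/-- The label `(q, k)` of the `q`-primary component of `ZMod n`, where `q ^ k` is its order. -/
def primaryLabel {n : ℕ} (q : n.primeFactors) : Nat.Primes × ℕ+ :=
  (⟨q, Nat.prime_of_mem_primeFactors q.2⟩,
    ⟨n.factorization q, factorization_pos_of_mem_primeFactors q.2⟩)

lemma injective_piZModToPrimary {m : ι → ℕ} (hm : ∀ i, m i ≠ 0) :
    Function.Injective (piZModToPrimary m) := by
  intro v w hvw
  funext i
  refine (ZMod.equivPi (m i) (hm i)).injective (funext fun q ↦ ?_)
  rw [zmodEquivPi_apply, zmodEquivPi_apply]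
  exact congrFun (congrFun hvw (primaryLabel q)) ⟨i, rfl⟩

lemma surjective_piZModToPrimary {m : ι → ℕ} (hm : ∀ i, m i ≠ 0) :
    Function.Surjective (piZModToPrimary m) := by
  intro w
  refine ⟨fun i ↦ (ZMod.equivPi (m i) (hm i)).symm fun q ↦ w (primaryLabel q) ⟨i, rfl⟩, ?_⟩
  funext ⟨q, k, hk⟩ ⟨i, hi⟩
  obtain rfl : (m i).factorization q = k := hi
  have hq : (q : ℕ) ∈ (m i).primeFactors := by
    rw [← Nat.support_factorization, Finsupp.mem_support_iff]
    exact hk.ne'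
  exact (zmodEquivPi_apply (hm i) _ ⟨q, hq⟩).symm.trans
    (congrFun ((ZMod.equivPi (m i) (hm i)).apply_symm_apply _) ⟨q, hq⟩)

/-- A product of finite cyclic groups is topologically the product of its primary components. -/
noncomputable def piZModEquivPrimary {m : ι → ℕ} (hm : ∀ i, m i ≠ 0) :
    (Π i, ZMod (m i)) ≃ₜ+
      Π c : Nat.Primes × ℕ+, PrimaryIndex m c → ZMod (c.1 ^ (c.2 : ℕ)) :=
  haveI (i : ι) : NeZero (m i) := ⟨hm i⟩
  let e := RingEquiv.ofBijective (piZModToPrimary m)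
    ⟨injective_piZModToPrimary hm, surjective_piZModToPrimary hm⟩
  { e.toAddEquiv, Continuous.homeoOfEquivCompactToT2 (f := e.toEquiv)
      (continuous_piZModToPrimary m) with }

theorem nonempty_continuousAddEquiv_piZMod {m : ι → ℕ} {n : κ → ℕ}
    (hm : ∀ i, m i ≠ 0) (hn : ∀ j, n j ≠ 0)
    (h : ∀ c, Nonempty (PrimaryIndex m c ≃ PrimaryIndex n c)) :
    Nonempty ((Π i, ZMod (m i)) ≃ₜ+ Π j, ZMod (n j)) := by
  let σ (c) : PrimaryIndex m c ≃ PrimaryIndex n c := (h c).some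
  let reindex := ContinuousLinearEquiv.piCongrRight fun c : Nat.Primes × ℕ+ ↦
    ContinuousLinearEquiv.piCongrLeft ℤ (fun _ ↦ ZMod (c.1 ^ (c.2 : ℕ))) (σ c)
  exact ⟨(piZModEquivPrimary hm).trans
    (reindex.toContinuousAddEquiv.trans (piZModEquivPrimary hn).symm)⟩

variable (G : ι → Type*) [∀ i, Group (G i)] [∀ i, IsCyclic (G i)]

/-- A product of cyclic groups, written additively with factors `ZMod (Nat.card (G i))`. An
infinite factor becomes `ZMod 0 = ℤ`. -/
noncomputable def piCyclicMulEquiv :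
    (Π i, G i) ≃* Multiplicative (Π i, ZMod (Nat.card (G i))) :=
  (MulEquiv.piCongrRight fun _ ↦ (zmodCyclicMulEquiv inferInstance).symm).trans
    (MulEquiv.piMultiplicative _).symm

variable [∀ i, TopologicalSpace (G i)]

lemma continuous_piCyclicMulEquiv_symm : Continuous (piCyclicMulEquiv G).symm :=
  continuous_pi fun i ↦
    (continuous_of_discreteTopology
      (f := fun a ↦ (zmodCyclicMulEquiv (G := G i) inferInstance) (.ofAdd a))).comp
      ((continuous_apply i).comp continuous_toAdd)

variable [∀ i, DiscreteTopology (G i)]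

lemma continuous_piCyclicMulEquiv : Continuous (piCyclicMulEquiv G) :=
  continuous_ofAdd.comp <| continuous_pi fun i ↦
    (continuous_of_discreteTopology
      (f := fun g : G i ↦ ((zmodCyclicMulEquiv inferInstance).symm g).toAdd)).comp
      (continuous_apply i)

end Products

section TorsionOfUnits

variable {R : Type*} [CommRing R]

lemma dvd_geom_sum_iff_of_dvd_sub_one {x y : R} (hy : x ∣ y - 1) (n : ℕ) :
    x ∣ ∑ i ∈ Finset.range n, y ^ i ↔ x ∣ n := by
  simpa only [one_pow, mul_one] using dvd_geom_sum₂_iff_of_dvd_sub (n := n) hy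

lemma sq_dvd_geom_sum_sub {p : ℕ} (hp : p.Prime) {y : R} (hy : (p : R) ∣ y - 1)
    (hy_two : p = 2 → (p : R) ^ 2 ∣ y - 1) :
    (p : R) ^ 2 ∣ (∑ i ∈ Finset.range p, y ^ i) - p := by
  rcases hp.eq_two_or_odd' with rfl | hodd
  · convert hy_two rfl using 1
    rw [Finset.sum_range_succ, Finset.sum_range_one]
    push_cast
    ring
  · obtain ⟨b, hb⟩ := hy
    simpa [← hb] using odd_sq_dvd_geom_sum₂_sub (1 : R) b hodd

lemma prime_natCast_not_dvd {p n : ℕ} (hp : Prime (p : R)) (hpn : p.Coprime n) :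
    ¬(p : R) ∣ n := fun hdvd ↦
  hp.not_isUnit ((Nat.Coprime.cast hpn).isUnit_of_dvd' dvd_rfl hdvd)

variable [IsDomain R] {p k : ℕ}

/- The condition `1 < k * (p - 1)` says that `p ^ k` lies in the disc of convergence of the `p`-adic
exponential; it excludes only `k = 0` and `p ^ k = 2`. -/
lemma geom_sum_ne_zero_of_pow_dvd_sub_one (hp : p.Prime) (hpR : Prime (p : R))
    (hk : 1 < k * (p - 1)) {y : R} (hy : (p : R) ^ k ∣ y - 1) {l : ℕ} (hl : l.Prime) :
    ∑ i ∈ Finset.range l, y ^ i ≠ 0 := by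
  have hk0 : k ≠ 0 := by
    rintro rfl
    omega
  have hpy : (p : R) ∣ y - 1 := (dvd_pow_self _ hk0).trans hy
  intro hsum
  obtain rfl | hne := eq_or_ne p l
  · have hsq : (p : R) ^ 2 ∣ p := by
      simpa [hsum] using sq_dvd_geom_sum_sub hp hpy fun hp2 ↦
        (pow_dvd_pow _ (by subst hp2; omega)).trans hy
    exact hpR.not_isUnit (isUnit_of_dvd_one ((mul_dvd_mul_iff_left hpR.ne_zero).mp
      (by rwa [mul_one, ← sq])))
  · exact prime_natCast_not_dvd hpR ((Nat.coprime_primes hp hl).mpr hne)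
      ((dvd_geom_sum_iff_of_dvd_sub_one hpy l).mp (hsum ▸ dvd_zero _))

lemma eq_one_of_isOfFinOrder_of_pow_dvd_sub_one (hp : p.Prime) (hpR : Prime (p : R))
    (hk : 1 < k * (p - 1)) {y : R} (hy : (p : R) ^ k ∣ y - 1) (hfin : IsOfFinOrder y) : y = 1 := by
  by_contra hne
  obtain ⟨l, hl, hdvd⟩ := Nat.exists_prime_and_dvd (mt orderOf_eq_one_iff.mp hne)
  set z := y ^ (orderOf y / l)
  have hz : orderOf z = l := orderOf_pow_orderOf_div hfin.orderOf_pos.ne' hdvd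
  have hzy : (p : R) ^ k ∣ z - 1 := hy.trans (sub_one_dvd_pow_sub_one y _)
  have hprod : (∑ i ∈ Finset.range l, z ^ i) * (z - 1) = 0 := by
    rw [geom_sum_mul, ← hz, pow_orderOf_eq_one, sub_self]
  have hz1 : z = 1 := sub_eq_zero.mp
    ((mul_eq_zero.mp hprod).resolve_left
      (geom_sum_ne_zero_of_pow_dvd_sub_one hp hpR hk hzy hl))
  exact hl.ne_one (by rw [← hz, hz1, orderOf_one])

/-- The map that a homomorphism of monoids induces on torsion units. -/
def torsionUnitsMap {A B : Type*} [CommMonoid A] [Monoid B] (f : A →* B) :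
    CommGroup.torsion Aˣ →* Bˣ :=
  (Units.map f).domRestrict (CommGroup.torsion Aˣ)

lemma injective_torsionUnitsMap {S : Type*} [Ring S] (hp : p.Prime) (hpR : Prime (p : R))
    (hk : 1 < k * (p - 1)) {f : R →+* S} (hf : RingHom.ker f ≤ Ideal.span {(p : R) ^ k}) :
    Function.Injective (torsionUnitsMap (f : R →* S)) := by
  rw [injective_iff_map_eq_one]
  rintro ⟨x, hx⟩ hfx
  have hker : (x : R) - 1 ∈ RingHom.ker f := by
    rw [RingHom.mem_ker, map_sub, map_one, sub_eq_zero]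
    exact congrArg Units.val hfx
  exact Subtype.ext <| Units.ext <| eq_one_of_isOfFinOrder_of_pow_dvd_sub_one hp hpR hk
    (Ideal.mem_span_singleton.mp (hf hker)) ((Units.coeHom R).isOfFinOrder hx)

end TorsionOfUnits

open Polynomial in
lemma exists_pow_eq_one_sub_mem {R : Type*} [CommRing R] {I : Ideal R} [HenselianRing R I] {n : ℕ}
    (hn : IsUnit (n : R)) {a : R} (ha : a ^ n - 1 ∈ I) : ∃ z : R, z ^ n = 1 ∧ z - a ∈ I := by
  obtain rfl | hn0 := eq_or_ne n 0
  · exact ⟨a, pow_zero a, by simp⟩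
  have ha_unit : IsUnit (Ideal.Quotient.mk I a) :=
    .of_pow_eq_one (by rw [← map_pow, ← sub_eq_zero, ← map_one (Ideal.Quotient.mk I), ← map_sub,
      Ideal.Quotient.eq_zero_iff_mem.mpr ha]) hn0
  have hderiv : IsUnit (Ideal.Quotient.mk I ((X ^ n - 1 : R[X]).derivative.eval a)) := by
    simpa [derivative_X_pow] using (hn.map (Ideal.Quotient.mk I)).mul (ha_unit.pow (n - 1))
  obtain ⟨z, hz, hza⟩ := HenselianRing.is_henselian (X ^ n - 1 : R[X])
    (monic_X_pow_sub_C 1 hn0) a (by simpa using ha) hderiv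
  exact ⟨z, by simpa [sub_eq_zero] using hz, hza⟩

section PadicUnits

variable (p : ℕ) [Fact p.Prime]

instance finite_torsion_padicUnits : Finite (CommGroup.torsion ℤ_[p]ˣ) := by
  have hp : p.Prime := Fact.out
  have : NeZero (p ^ 2) := ⟨pow_ne_zero 2 hp.ne_zero⟩
  refine Finite.of_injective _
    (injective_torsionUnitsMap hp PadicInt.prime_p ?_ (PadicInt.ker_toZModPow 2).le)
  have := hp.two_le
  omega

lemma surjective_torsionUnitsMap_toZMod :
    Function.Surjective (torsionUnitsMap (PadicInt.toZMod (p := p) : ℤ_[p] →* ZMod p)) := by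
  intro u
  have hp : p.Prime := Fact.out
  have hp1 : p - 1 ≠ 0 := (Nat.sub_pos_of_lt hp.one_lt).ne'
  obtain ⟨a, ha⟩ := ZMod.ringHom_surjective (PadicInt.toZMod (p := p)) u
  have hroot : a ^ (p - 1) - 1 ∈ IsLocalRing.maximalIdeal ℤ_[p] := by
    rw [← PadicInt.ker_toZMod, RingHom.mem_ker, map_sub, map_pow, map_one, ha,
      ZMod.pow_card_sub_one_eq_one u.ne_zero, sub_self]
  have hunit : IsUnit ((p - 1 : ℕ) : ℤ_[p]) := by
    rw [PadicInt.isUnit_iff, PadicInt.norm_natCast_eq_one_iff, hp.coprime_iff_not_dvd]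
    exact Nat.not_dvd_of_pos_of_lt (Nat.pos_of_ne_zero hp1) (Nat.sub_one_lt hp.ne_zero)
  obtain ⟨z, hz, hza⟩ := exists_pow_eq_one_sub_mem hunit hroot
  have htorsion : Units.ofPowEqOne z (p - 1) hz hp1 ∈ CommGroup.torsion ℤ_[p]ˣ :=
    isOfFinOrder_iff_pow_eq_one.mpr
      ⟨p - 1, Nat.pos_of_ne_zero hp1, Units.pow_ofPowEqOne hz hp1⟩
  refine ⟨⟨_, htorsion⟩, Units.ext ?_⟩
  rw [← PadicInt.ker_toZMod, RingHom.mem_ker, map_sub, ha, sub_eq_zero] at hza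
  exact hza

lemma card_torsion_padicUnits (hp2 : p ≠ 2) : Nat.card (CommGroup.torsion ℤ_[p]ˣ) = p - 1 := by
  have hp : p.Prime := Fact.out
  have hinj :
      Function.Injective (torsionUnitsMap (PadicInt.toZMod (p := p) : ℤ_[p] →* ZMod p)) := by
    refine injective_torsionUnitsMap (k := 1) hp PadicInt.prime_p ?_ ?_
    · have := hp.two_le
      omega
    · rw [PadicInt.ker_toZMod, PadicInt.maximalIdeal_eq_span_p, pow_one]
  rw [Nat.card_eq_of_bijective _ ⟨hinj, surjective_torsionUnitsMap_toZMod p⟩,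
    Nat.card_eq_fintype_card, ZMod.card_units]

end PadicUnits

lemma factorization_eq_of_modEq {q k n : ℕ} (hq : q.Prime) (h : n ≡ q ^ k [MOD q ^ (k + 1)]) :
    n.factorization q = k := by
  have hdvd : q ^ k ∣ n := (h.dvd_iff (pow_dvd_pow q k.le_succ)).mpr dvd_rfl
  have hndvd : ¬q ^ (k + 1) ∣ n := by
    rw [h.dvd_iff dvd_rfl, Nat.pow_dvd_pow_iff_le_right hq.one_lt]
    omega
  have hn : n ≠ 0 := by
    rintro rfl
    exact hndvd (dvd_zero _)
  rw [hq.pow_dvd_iff_le_factorization hn] at hdvd hndvd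
  omega

lemma infinite_primaryIndex_pnat (c : Nat.Primes × ℕ+) :
    Infinite (PrimaryIndex (fun n : ℕ+ ↦ (n : ℕ)) c) := by
  obtain ⟨⟨q, hq⟩, k, hk⟩ := c
  have hinf : {n : ℕ | n ≡ q ^ k [MOD q ^ (k + 1)]}.Infinite :=
    Nat.frequently_atTop_iff_infinite.mp
      (Nat.frequently_modEq (pow_ne_zero _ hq.ne_zero) (q ^ k))
  refine ((hinf.preimage (f := fun n : ℕ+ ↦ (n : ℕ)) fun n hn ↦ ?_).mono
    fun n ↦ factorization_eq_of_modEq hq).to_subtype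
  have hn0 : n ≠ 0 := by
    rintro rfl
    simpa using (factorization_eq_of_modEq hq hn).trans_ne hk.ne'
  exact ⟨⟨n, Nat.pos_of_ne_zero hn0⟩, rfl⟩

lemma infinite_setOf_prime_and_factorization_sub_one_eq {q k : ℕ} (hq : q.Prime) (hk : k ≠ 0) :
    {p : ℕ | p.Prime ∧ (p - 1).factorization q = k}.Infinite := by
  have hcop : (q ^ k + 1).Coprime (q ^ (k + 1)) := by
    refine Nat.Coprime.pow_right _ (.symm (hq.coprime_iff_not_dvd.mpr fun hdvd ↦ ?_))
    exact hq.not_dvd_one ((Nat.dvd_add_right (dvd_pow_self q hk)).mp hdvd)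
  refine (Nat.infinite_setOfPred_prime_and_modEq (pow_ne_zero _ hq.ne_zero) hcop).mono ?_
  rintro p ⟨hp, hmod⟩
  refine ⟨hp, factorization_eq_of_modEq hq (Nat.ModEq.add_right_cancel' 1 ?_)⟩
  rwa [Nat.sub_add_cancel hp.one_le]

lemma infinite_primaryIndex_torsion_padicUnits (c : Nat.Primes × ℕ+) :
    Infinite (PrimaryIndex
      (fun p : Nat.Primes ↦ Nat.card (CommGroup.torsion ℤ_[(p : ℕ)]ˣ)) c) := by
  obtain ⟨⟨q, hq⟩, k, hk⟩ := c
  refine (((infinite_setOf_prime_and_factorization_sub_one_eq hq hk.ne').preimage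
    (f := fun p : Nat.Primes ↦ (p : ℕ)) fun p hp ↦ ⟨⟨p, hp.1⟩, rfl⟩).mono ?_).to_subtype
  rintro p ⟨-, hpk : ((p : ℕ) - 1).factorization q = k⟩
  have hp2 : (p : ℕ) ≠ 2 := by
    intro hp2
    exact hk.ne (by simpa [hp2] using hpk)
  exact (congrArg (·.factorization q) (card_torsion_padicUnits p hp2)).trans hpk

/-- There is an isomorphism of topological groups `∏_p T_p ≅ ∏_{n ≥ 1} ℤ/nℤ`, where `T_p` is
the torsion subgroup of `ℤ_pˣ`, the left product is over all primes `p` and the right product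
is over all positive integers `n`, both carrying the product topology. -/
theorem prod_torsion_padicUnits_iso_prod_zmod :
    ∃ e : (Π p : Nat.Primes, (CommGroup.torsion ℤ_[(p : ℕ)]ˣ : Subgroup _)) ≃*
        Multiplicative (Π n : ℕ+, ZMod (n : ℕ)),
      Continuous e ∧ Continuous e.symm := by
  obtain ⟨E⟩ := nonempty_continuousAddEquiv_piZMod
    (m := fun p : Nat.Primes ↦ Nat.card (CommGroup.torsion ℤ_[(p : ℕ)]ˣ))
    (n := fun n : ℕ+ ↦ (n : ℕ)) (fun _ ↦ Nat.card_pos.ne') (fun n ↦ n.ne_zero)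
    fun c ↦
      have := infinite_primaryIndex_torsion_padicUnits c
      have := infinite_primaryIndex_pnat c
      nonempty_equiv_of_countable
  exact ⟨(piCyclicMulEquiv _).trans E.toAddEquiv.toMultiplicative,
    E.continuous.comp (continuous_piCyclicMulEquiv _),
    (continuous_piCyclicMulEquiv_symm _).comp E.symm.continuous⟩
end
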